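/- arXiv:1511.00478 — 2 statements merged into one kernel-verified Lean document; each statement's English description precedes it below -/
import Mathlib

section
/- Let a be an odd positive integer, let m be a nonnegative integer, and let n be a positive integer with n ≡ m + (a−1)/2 (mod 2). Then t(a,3a,8m+4,8m+4;n) = (2/3)·N(a,3a,8m+4,8m+4; 8n+16m+4a+8) − 2·N(a,3a,8m+4,8m+4; 2n+4m+a+2). -/
/-!
Put `k = 2m + 1` and `M = 2n + 4m + a + 2`, and let `S` be the set of solutions of
`M = a (x² + 3y²) + k (z² + w²)`. The congruence on `n` says `M ≡ -k (mod 4)`; since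
`x² + 3y²` is either odd or divisible by `4`, this forces `z ≡ w` and `x ≢ y (mod 2)` on `S`
(`SolSet_parity`). So `S` splits into `So` (`z, w` odd) and `Se` (`z, w` even).

In the ring `ℤ[√-3]`, multiplication by an element of norm `4` turns a solution of
`x² + 3y² = j` into one of `X² + 3Y² = 4j`. For odd `j`, the case of every point of `S`, the
multiplier `1 + √-3` hits exactly the odd pairs with
`X ≡ Y (mod 4)`, the same multiplier followed by conjugation hits the odd pairs with
`X ≡ -Y (mod 4)`, and the multiplier `2` hits the even pairs. Applied to the first two coordinates,
these three injections `mulA`, `mulB`, `dbl` give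

* `N(a,3a,4k,4k; 4M) = 3 |S|` (`card_big`),
* `t(a,3a,4k,4k; n) = 2 |So|` (`card_t`), after completing the square in the triangular numbers,
* `N(a,3a,4k,4k; M) = |Se|` (`card_small`), by doubling `z` and `w`.

The theorem is then `2 |So| = (2/3) · 3 (|So| + |Se|) - 2 |Se|`.
-/

open scoped BigOperators

/-- `Nquad a b c d n` is the number of quadruples `(x,y,z,w) ∈ ℤ⁴` with
`n = a*x^2 + b*y^2 + c*z^2 + d*w^2`. -/
noncomputable def Nquad (a b c d : ℕ) (n : ℕ) : ℕ :=
  Nat.card {p : ℤ × ℤ × ℤ × ℤ //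
    (n : ℤ) = a * p.1 ^ 2 + b * p.2.1 ^ 2 + c * p.2.2.1 ^ 2 + d * p.2.2.2 ^ 2}

/-- `tquad a b c d n` is the number of quadruples `(x,y,z,w) ∈ ℤ⁴` with
`n = a*x(x-1)/2 + b*y(y-1)/2 + c*z(z-1)/2 + d*w(w-1)/2`. -/
noncomputable def tquad (a b c d : ℕ) (n : ℕ) : ℕ :=
  Nat.card {p : ℤ × ℤ × ℤ × ℤ //
    (n : ℤ) = a * (p.1 * (p.1 - 1) / 2) + b * (p.2.1 * (p.2.1 - 1) / 2)
      + c * (p.2.2.1 * (p.2.2.1 - 1) / 2) + d * (p.2.2.2 * (p.2.2.2 - 1) / 2)}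

/-- Integer solutions of `2n + 4m + a + 2 = a (x² + 3y²) + (2m + 1)(z² + w²)`. -/
def SolSet (a m n : ℕ) : Set (ℤ × ℤ × ℤ × ℤ) :=
  {p | 2 * (n : ℤ) + 4 * m + a + 2 =
    a * (p.1 ^ 2 + 3 * p.2.1 ^ 2) + (2 * m + 1) * (p.2.2.1 ^ 2 + p.2.2.2 ^ 2)}

/-- The solutions in `SolSet` whose last two coordinates are odd. -/
def So (a m n : ℕ) : Set (ℤ × ℤ × ℤ × ℤ) :=
  {p | p ∈ SolSet a m n ∧ p.2.2.1 % 2 = 1 ∧ p.2.2.2 % 2 = 1}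

/-- The solutions in `SolSet` whose last two coordinates are even. -/
def Se (a m n : ℕ) : Set (ℤ × ℤ × ℤ × ℤ) :=
  {p | p ∈ SolSet a m n ∧ p.2.2.1 % 2 = 0 ∧ p.2.2.2 % 2 = 0}

/-- Multiplication of `x + y√-3` by `1 + √-3`, the last two coordinates being kept. -/
def mulA (p : ℤ × ℤ × ℤ × ℤ) : ℤ × ℤ × ℤ × ℤ := (p.1 - 3 * p.2.1, p.1 + p.2.1, p.2.2)

/-- Multiplication of `x + y√-3` by `1 + √-3` followed by conjugation. -/
def mulB (p : ℤ × ℤ × ℤ × ℤ) : ℤ × ℤ × ℤ × ℤ := (p.1 - 3 * p.2.1, -(p.1 + p.2.1), p.2.2)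

/-- Multiplication of `x + y√-3` by `2`. -/
def dbl (p : ℤ × ℤ × ℤ × ℤ) : ℤ × ℤ × ℤ × ℤ := (2 * p.1, 2 * p.2.1, p.2.2)

lemma mulA_inj : Function.Injective mulA := by
  rintro ⟨x, y, z, w⟩ ⟨x', y', z', w'⟩ h
  simp only [mulA, Prod.mk.injEq] at h ⊢
  omega

lemma mulB_inj : Function.Injective mulB := by
  rintro ⟨x, y, z, w⟩ ⟨x', y', z', w'⟩ h
  simp only [mulB, Prod.mk.injEq] at h ⊢
  omega

lemma dbl_inj : Function.Injective dbl := by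
  rintro ⟨x, y, z, w⟩ ⟨x', y', z', w'⟩ h
  simp only [dbl, Prod.mk.injEq] at h ⊢
  omega

lemma sq_mod_four (x : ℤ) : ∃ q, x ^ 2 = 4 * q + x % 2 := by
  rcases Int.even_or_odd' x with ⟨c, rfl | rfl⟩
  · rw [show 2 * c % 2 = 0 by omega]
    exact ⟨c ^ 2, by ring⟩
  · rw [show (2 * c + 1) % 2 = 1 by omega]
    exact ⟨c ^ 2 + c, by ring⟩

/-- The congruence on `n` gives `2n + 4m + a + 2 ≡ -(2m + 1) (mod 4)`, which rules out `z ≢ w`: then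
`x² + 3y²` would be even, hence divisible by `4`, and the right-hand side `≡ 2m + 1`. -/
lemma SolSet_parity {a m n : ℕ} (ha : Odd a) (hcong : n % 2 = (m + (a - 1) / 2) % 2)
    {x y z w : ℤ} (h : (x, y, z, w) ∈ SolSet a m n) :
    (x + y) % 2 = 1 ∧ (z + w) % 2 = 0 := by
  obtain ⟨X, hX⟩ := sq_mod_four x
  obtain ⟨Y, hY⟩ := sq_mod_four y
  obtain ⟨Z, hZ⟩ := sq_mod_four z
  obtain ⟨W, hW⟩ := sq_mod_four w
  obtain ⟨b, rfl⟩ := ha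
  simp only [SolSet, Set.mem_ofPred_eq] at h
  push_cast at h
  -- Only the residues of the squares mod 4 matter: the quotients enter through `u` and `v`.
  obtain ⟨u, hu⟩ : ∃ u : ℤ, u = (2 * b + 1) * (X + 3 * Y) := ⟨_, rfl⟩
  obtain ⟨v, hv⟩ : ∃ v : ℤ, v = (2 * m + 1) * (Z + W) := ⟨_, rfl⟩
  have key : 2 * (n : ℤ) + 4 * m + (2 * b + 1) + 2 = 4 * u + 4 * v
      + (2 * b + 1) * (x % 2 + 3 * (y % 2)) + (2 * m + 1) * (z % 2 + w % 2) := by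
    rw [h, hX, hY, hZ, hW, hu, hv]; ring
  rcases Int.emod_two_eq_zero_or_one x with hx | hx <;>
  rcases Int.emod_two_eq_zero_or_one y with hy | hy <;>
  rcases Int.emod_two_eq_zero_or_one z with hz | hz <;>
  rcases Int.emod_two_eq_zero_or_one w with hw | hw <;>
  · rw [hx, hy, hz, hw] at key
    omega

lemma SolSet_finite {a m n : ℕ} (ha : Odd a) : (SolSet a m n).Finite := by
  have ha1 : (1 : ℤ) ≤ a := by exact_mod_cast ha.pos
  set K : ℤ := 2 * (n : ℤ) + 4 * m + a + 2 with hK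
  have hfin : ((Set.Icc (-K) K) ×ˢ (Set.Icc (-K) K) ×ˢ (Set.Icc (-K) K) ×ˢ
      (Set.Icc (-K) K)).Finite :=
    (Set.finite_Icc _ _).prod ((Set.finite_Icc _ _).prod
      ((Set.finite_Icc _ _).prod (Set.finite_Icc _ _)))
  refine hfin.subset ?_
  rintro ⟨x, y, z, w⟩ h
  simp only [SolSet, Set.mem_ofPred_eq, ← hK] at h
  have hm : (0 : ℤ) ≤ m := by positivity
  have h1 : x ^ 2 + 3 * y ^ 2 ≤ a * (x ^ 2 + 3 * y ^ 2) :=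
    le_mul_of_one_le_left (by positivity) ha1
  have h2 : z ^ 2 + w ^ 2 ≤ (2 * m + 1) * (z ^ 2 + w ^ 2) :=
    le_mul_of_one_le_left (by positivity) (by omega)
  have bd : ∀ t : ℤ, t ^ 2 ≤ K → t ∈ Set.Icc (-K) K := fun t ht =>
    ⟨by nlinarith [Int.le_self_sq (-t)], by nlinarith [Int.le_self_sq t]⟩
  have := sq_nonneg x
  have := sq_nonneg y
  have := sq_nonneg z
  have := sq_nonneg w
  exact ⟨bd x (by omega), bd y (by omega), bd z (by omega), bd w (by omega)⟩

/-- Odd pairs `(X, Y)` with `4 ∣ X - Y` or `4 ∣ X + Y` are values of `mulA` or `mulB`. -/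
lemma odd_cases {X Y : ℤ} (hX : X % 2 = 1) (hY : Y % 2 = 1) :
    (∃ x y, X = x - 3 * y ∧ Y = x + y) ∨ (∃ x y, X = x - 3 * y ∧ Y = -(x + y)) := by
  by_cases h : (X - Y) % 4 = 0
  · exact Or.inl ⟨(X + 3 * Y) / 4, (Y - X) / 4, by omega, by omega⟩
  · exact Or.inr ⟨(X - 3 * Y) / 4, (-Y - X) / 4, by omega, by omega⟩

lemma mulA_mulB_disjoint {a m n : ℕ} (ha : Odd a) (hcong : n % 2 = (m + (a - 1) / 2) % 2) :
    Disjoint (mulA '' SolSet a m n) (mulB '' SolSet a m n) := by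
  rw [Set.disjoint_left]
  rintro _ ⟨⟨x, y, z, w⟩, h, rfl⟩ ⟨⟨x', y', z', w'⟩, h', e⟩
  have := SolSet_parity ha hcong h
  simp only [mulA, mulB, Prod.mk.injEq] at e
  omega

/-- The pairs `(X, Y)` fall into three classes, each in bijection with `SolSet`. -/
lemma card_big {a m n : ℕ} (ha : Odd a) (hcong : n % 2 = (m + (a - 1) / 2) % 2) :
    Nquad a (3 * a) (8 * m + 4) (8 * m + 4) (8 * n + 16 * m + 4 * a + 8) =
      3 * (SolSet a m n).ncard := by
  have hS : (SolSet a m n).Finite := SolSet_finite ha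
  have hset : {p : ℤ × ℤ × ℤ × ℤ | ((8 * n + 16 * m + 4 * a + 8 : ℕ) : ℤ) =
      a * p.1 ^ 2 + (3 * a : ℕ) * p.2.1 ^ 2 + (8 * m + 4 : ℕ) * p.2.2.1 ^ 2
        + (8 * m + 4 : ℕ) * p.2.2.2 ^ 2} =
      (mulA '' SolSet a m n ∪ mulB '' SolSet a m n) ∪ dbl '' SolSet a m n := by
    ext ⟨X, Y, Z, W⟩
    constructor
    · intro h
      simp only [Set.mem_ofPred_eq] at h
      push_cast at h
      have hpar : X % 2 = Y % 2 := by
        obtain ⟨b, rfl⟩ := ha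
        obtain ⟨p, hp⟩ := sq_mod_four X
        obtain ⟨q, hq⟩ := sq_mod_four Y
        have : X ^ 2 + Y ^ 2 = 2 * (4 * n + 8 * m + 2 * (2 * b + 1) + 4 - b * X ^ 2
          - (3 * b + 1) * Y ^ 2 - (4 * m + 2) * (Z ^ 2 + W ^ 2)) := by
          push_cast at h
          linear_combination -h
        omega
      rcases Int.emod_two_eq_zero_or_one X with h0 | h1
      · obtain ⟨x, rfl⟩ : ∃ x, X = 2 * x := ⟨X / 2, by omega⟩
        obtain ⟨y, rfl⟩ : ∃ y, Y = 2 * y := ⟨Y / 2, by omega⟩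
        refine Or.inr ⟨(x, y, Z, W), ?_, rfl⟩
        simp only [SolSet, Set.mem_ofPred_eq]
        linarith
      · rcases odd_cases h1 (hpar ▸ h1) with ⟨x, y, rfl, rfl⟩ | ⟨x, y, rfl, rfl⟩
        · refine Or.inl (Or.inl ⟨(x, y, Z, W), ?_, rfl⟩)
          simp only [SolSet, Set.mem_ofPred_eq]
          linarith
        · refine Or.inl (Or.inr ⟨(x, y, Z, W), ?_, rfl⟩)
          simp only [SolSet, Set.mem_ofPred_eq]
          linarith
    · rintro ((⟨⟨x, y, z, w⟩, h, e⟩ | ⟨⟨x, y, z, w⟩, h, e⟩) | ⟨⟨x, y, z, w⟩, h, e⟩) <;>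
      · simp only [mulA, mulB, dbl, Prod.mk.injEq] at e
        obtain ⟨rfl, rfl, rfl, rfl⟩ := e
        simp only [SolSet, Set.mem_ofPred_eq] at h ⊢
        push_cast
        linear_combination 4 * h
  have hd : Disjoint (mulA '' SolSet a m n ∪ mulB '' SolSet a m n) (dbl '' SolSet a m n) := by
    rw [Set.disjoint_left]
    rintro _ (⟨⟨x, y, z, w⟩, h, rfl⟩ | ⟨⟨x, y, z, w⟩, h, rfl⟩) ⟨⟨x', y', z', w'⟩, h', e⟩ <;>
    · have := SolSet_parity ha hcong h
      simp only [mulA, mulB, dbl, Prod.mk.injEq] at e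
      omega
  have hc : Nquad a (3 * a) (8 * m + 4) (8 * m + 4) (8 * n + 16 * m + 4 * a + 8) =
      ((mulA '' SolSet a m n ∪ mulB '' SolSet a m n) ∪ dbl '' SolSet a m n).ncard := by
    rw [← hset]; rfl
  rw [hc, Set.ncard_union_eq hd ((hS.image _).union (hS.image _)) (hS.image _),
    Set.ncard_union_eq (mulA_mulB_disjoint ha hcong) (hS.image _) (hS.image _),
    Set.ncard_image_of_injective _ mulA_inj, Set.ncard_image_of_injective _ mulB_inj,
    Set.ncard_image_of_injective _ dbl_inj]
  ring

/-- The substitution `x ↦ 2x - 1` in each coordinate, which turns `x(x-1)/2` into `(X² - 1)/8`. -/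
def toOdd (p : ℤ × ℤ × ℤ × ℤ) : ℤ × ℤ × ℤ × ℤ :=
  (2 * p.1 - 1, 2 * p.2.1 - 1, 2 * p.2.2.1 - 1, 2 * p.2.2.2 - 1)

lemma toOdd_inj : Function.Injective toOdd := by
  rintro ⟨x, y, z, w⟩ ⟨x', y', z', w'⟩ h
  simp only [toOdd, Prod.mk.injEq] at h ⊢
  omega

lemma sq_two_mul_sub_one (x : ℤ) : (2 * x - 1) ^ 2 = 8 * (x * (x - 1) / 2) + 1 := by
  have h := Int.mul_ediv_cancel' (Int.even_mul_pred_self x).two_dvd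
  linear_combination -4 * h

lemma card_t {a m n : ℕ} (ha : Odd a) (hcong : n % 2 = (m + (a - 1) / 2) % 2) :
    tquad a (3 * a) (8 * m + 4) (8 * m + 4) n = 2 * (So a m n).ncard := by
  have hsub : So a m n ⊆ SolSet a m n := fun p hp => hp.1
  have hS : (So a m n).Finite := (SolSet_finite ha).subset hsub
  have hset : toOdd '' {p : ℤ × ℤ × ℤ × ℤ | (n : ℤ) = a * (p.1 * (p.1 - 1) / 2)
      + (3 * a : ℕ) * (p.2.1 * (p.2.1 - 1) / 2) + (8 * m + 4 : ℕ) * (p.2.2.1 * (p.2.2.1 - 1) / 2)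
      + (8 * m + 4 : ℕ) * (p.2.2.2 * (p.2.2.2 - 1) / 2)} =
      mulA '' So a m n ∪ mulB '' So a m n := by
    ext ⟨X, Y, Z, W⟩
    constructor
    · rintro ⟨⟨x, y, z, w⟩, h, e⟩
      simp only [toOdd, Prod.mk.injEq] at e
      obtain ⟨hX, hY, rfl, rfl⟩ := e
      simp only [Set.mem_ofPred_eq] at h
      push_cast at h
      have e1 := sq_two_mul_sub_one x
      have e2 := sq_two_mul_sub_one y
      have e3 := sq_two_mul_sub_one z
      have e4 := sq_two_mul_sub_one w
      rw [hX] at e1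
      rw [hY] at e2
      have h8 : 4 * (2 * (n : ℤ) + 4 * m + a + 2) = a * (X ^ 2 + 3 * Y ^ 2)
          + 4 * (2 * m + 1) * ((2 * z - 1) ^ 2 + (2 * w - 1) ^ 2) := by
        rw [e1, e2, e3, e4]
        linear_combination 8 * h
      rcases odd_cases (X := X) (Y := Y) (by omega) (by omega) with
        ⟨p, q, rfl, rfl⟩ | ⟨p, q, rfl, rfl⟩
      · refine Or.inl ⟨(p, q, _, _), ⟨?_, ?_, ?_⟩, rfl⟩
        · simp only [SolSet, Set.mem_ofPred_eq]
          linarith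
        all_goals dsimp only; omega
      · refine Or.inr ⟨(p, q, _, _), ⟨?_, ?_, ?_⟩, rfl⟩
        · simp only [SolSet, Set.mem_ofPred_eq]
          linarith
        all_goals dsimp only; omega
    · rintro (⟨⟨x, y, z, w⟩, ⟨h, hz, hw⟩, e⟩ | ⟨⟨x, y, z, w⟩, ⟨h, hz, hw⟩, e⟩) <;>
      · have hp := SolSet_parity ha hcong h
        simp only [mulA, mulB, Prod.mk.injEq] at e
        dsimp only at hz hw
        obtain ⟨hX, hY, rfl, rfl⟩ := e
        obtain ⟨X', rfl⟩ : ∃ t, X = 2 * t - 1 := ⟨(X + 1) / 2, by omega⟩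
        obtain ⟨Y', rfl⟩ : ∃ t, Y = 2 * t - 1 := ⟨(Y + 1) / 2, by omega⟩
        obtain ⟨z', rfl⟩ : ∃ t, z = 2 * t - 1 := ⟨(z + 1) / 2, by omega⟩
        obtain ⟨w', rfl⟩ : ∃ t, w = 2 * t - 1 := ⟨(w + 1) / 2, by omega⟩
        refine ⟨(X', Y', z', w'), ?_, rfl⟩
        simp only [SolSet, Set.mem_ofPred_eq] at h ⊢
        push_cast
        have e1 := sq_two_mul_sub_one X'
        have e2 := sq_two_mul_sub_one Y'
        rw [sq_two_mul_sub_one z', sq_two_mul_sub_one w'] at h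
        have h4 : 4 * (x ^ 2 + 3 * y ^ 2) = (2 * X' - 1) ^ 2 + 3 * (2 * Y' - 1) ^ 2 := by
          rw [← hX, ← hY]; ring
        rw [e1, e2] at h4
        apply mul_left_cancel₀ (show (8 : ℤ) ≠ 0 by norm_num)
        linear_combination 4 * h + (a : ℤ) * h4
  have hd : Disjoint (mulA '' So a m n) (mulB '' So a m n) :=
    (mulA_mulB_disjoint ha hcong).mono (Set.image_mono hsub) (Set.image_mono hsub)
  have hc : tquad a (3 * a) (8 * m + 4) (8 * m + 4) n =
      (mulA '' So a m n ∪ mulB '' So a m n).ncard := by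
    rw [← hset, Set.ncard_image_of_injective _ toOdd_inj]; rfl
  rw [hc, Set.ncard_union_eq hd (hS.image _) (hS.image _),
    Set.ncard_image_of_injective _ mulA_inj, Set.ncard_image_of_injective _ mulB_inj]
  ring

lemma card_small (a m n : ℕ) :
    Nquad a (3 * a) (8 * m + 4) (8 * m + 4) (2 * n + 4 * m + a + 2) = (Se a m n).ncard := by
  let g : ℤ × ℤ × ℤ × ℤ → ℤ × ℤ × ℤ × ℤ := fun p => (p.1, p.2.1, 2 * p.2.2.1, 2 * p.2.2.2)
  have hg : Function.Injective g := by
    rintro ⟨x, y, z, w⟩ ⟨x', y', z', w'⟩ h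
    simp only [g, Prod.mk.injEq] at h ⊢
    omega
  have hset : g '' {p : ℤ × ℤ × ℤ × ℤ | ((2 * n + 4 * m + a + 2 : ℕ) : ℤ) =
      a * p.1 ^ 2 + (3 * a : ℕ) * p.2.1 ^ 2 + (8 * m + 4 : ℕ) * p.2.2.1 ^ 2
        + (8 * m + 4 : ℕ) * p.2.2.2 ^ 2} = Se a m n := by
    ext ⟨X, Y, Z, W⟩
    constructor
    · rintro ⟨⟨x, y, z, w⟩, h, e⟩
      simp only [g, Prod.mk.injEq] at e
      obtain ⟨rfl, rfl, rfl, rfl⟩ := e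
      simp only [Set.mem_ofPred_eq] at h
      push_cast at h
      refine ⟨?_, by dsimp only; omega, by dsimp only; omega⟩
      simp only [SolSet, Set.mem_ofPred_eq]
      linear_combination h
    · rintro ⟨h, hz, hw⟩
      dsimp only at hz hw
      obtain ⟨z, rfl⟩ : ∃ t, Z = 2 * t := ⟨Z / 2, by omega⟩
      obtain ⟨w, rfl⟩ : ∃ t, W = 2 * t := ⟨W / 2, by omega⟩
      refine ⟨(X, Y, z, w), ?_, rfl⟩
      simp only [SolSet, Set.mem_ofPred_eq] at h ⊢
      push_cast
      linear_combination h
  rw [← hset, Set.ncard_image_of_injective _ hg]; rfl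

lemma card_split {a m n : ℕ} (ha : Odd a) (hcong : n % 2 = (m + (a - 1) / 2) % 2) :
    (SolSet a m n).ncard = (So a m n).ncard + (Se a m n).ncard := by
  have hS : (SolSet a m n).Finite := SolSet_finite ha
  have hu : SolSet a m n = So a m n ∪ Se a m n := by
    ext ⟨x, y, z, w⟩
    constructor
    · intro h
      have hp := SolSet_parity ha hcong h
      rcases Int.emod_two_eq_zero_or_one z with h0 | h1
      · exact Or.inr ⟨h, h0, by dsimp only; omega⟩
      · exact Or.inl ⟨h, h1, by dsimp only; omega⟩
    · rintro (h | h) <;> exact h.1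
  have hd : Disjoint (So a m n) (Se a m n) := by
    rw [Set.disjoint_left]
    rintro p ⟨_, h1, _⟩ ⟨_, h2, _⟩
    omega
  rw [hu]
  exact Set.ncard_union_eq hd (hS.subset fun p hp => hp.1) (hS.subset fun p hp => hp.1)

theorem stmt_2 (a m n : ℕ) (ha : Odd a) (hn : 0 < n)
    (hcong : n % 2 = (m + (a - 1) / 2) % 2) :
    (tquad a (3 * a) (8 * m + 4) (8 * m + 4) n : ℚ) =
      2 / 3 * Nquad a (3 * a) (8 * m + 4) (8 * m + 4) (8 * n + 16 * m + 4 * a + 8) -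
        2 * Nquad a (3 * a) (8 * m + 4) (8 * m + 4) (2 * n + 4 * m + a + 2) := by
  rw [card_t ha hcong, card_big ha hcong, card_small, card_split ha hcong]
  push_cast
  ring
end

section
/- Let a be an odd positive integer, let k and m be nonnegative integers, and let n be a positive integer with n ≡ (a−1)/2 (mod 2). Then t(a,3a,16k+4,16m+4;n) = (2/3)·N(a,3a,16k+4,16m+4; 8n+16k+16m+4a+8) − 2·N(a,3a,16k+4,16m+4; 2n+4k+4m+a+2). -/
/-!
Put `M = 2n + 4k + 4m + a + 2`, and let `A` be the set of integer solutions of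
`a x² + 3a y² + (16k+4) z² + (16m+4) w² = 4M`. Completing squares, the representations counted by
`t` are the members of `A` with all coordinates odd. The congruence on `n` says exactly
that `4M ≡ 12 (mod 16)`, and this forces (`parity_of_sol`) `x ≡ y` and `z ≡ w (mod 2)`, and
`x/2 + y/2` odd whenever `x, y` are even.

Split `A` by the parity of `x` and of `z`. The map `(x, y) ↦ ((x + 3y)/2, (x - y)/2)`
(multiplication by a sixth root of unity followed by conjugation, for the norm form `x² + 3y²`)
is an involution that
matches the solutions with `x, y` even with those having `x, y` odd and `x ≡ y (mod 4)`. The sign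
change `y ↦ -y` matches the latter with the solutions having `x, y` odd and `x ≡ -y (mod 4)`. So for
each parity of `z` there are twice as many solutions with `x` odd as with `x` even
(`card_odd_eq_two_mul_card_even`). Writing `e₀, e₁` for the numbers of solutions with `x` even and
`z` even, respectively odd, the three counts are `t = 2e₁`, `N(4M) = 3e₀ + 3e₁`, and, by
halving all coordinates, `N(M) = e₀`.
-/

open scoped BigOperators

lemma exists_sq_of_odd {x : ℤ} (h : x % 2 = 1) : ∃ p, x ^ 2 = 8 * p + 1 := by
  obtain ⟨p, hp⟩ := Int.eight_dvd_sq_sub_one_of_odd (Int.odd_iff.2 h)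
  exact ⟨p, by linarith⟩

lemma exists_sq_of_even {x : ℤ} (h : x % 2 = 0) : ∃ p, x ^ 2 = 4 * p := by
  obtain ⟨i, rfl⟩ := Int.dvd_of_emod_eq_zero h
  exact ⟨i ^ 2, by ring⟩

/-- The integer quadruples representing `R` by `a x² + 3a y² + (16k+4) z² + (16m+4) w²`. -/
def IsSol (a k m R : ℤ) (p : ℤ × ℤ × ℤ × ℤ) : Prop :=
  R = a * p.1 ^ 2 + 3 * a * p.2.1 ^ 2 + (16 * k + 4) * p.2.2.1 ^ 2 + (16 * m + 4) * p.2.2.2 ^ 2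

lemma finite_isSol {a k m R : ℤ} (ha : 0 < a) (hk : 0 ≤ k) (hm : 0 ≤ m) :
    {p | IsSol a k m R p}.Finite := by
  refine (Set.finite_Icc ((-R, -R, -R, -R) : ℤ × ℤ × ℤ × ℤ) (R, R, R, R)).subset ?_
  rintro ⟨x, y, z, w⟩ h
  simp only [Set.mem_ofPred_eq, IsSol] at h
  -- each coordinate satisfies `|u| ≤ u² ≤ R`
  have key : ∀ u : ℤ, u ^ 2 ≤ R → -R ≤ u ∧ u ≤ R := by
    intro u hu
    have h1 := Int.le_self_sq u
    have h2 := Int.le_self_sq (-u)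
    rw [neg_sq] at h2
    constructor <;> linarith
  have nx : 0 ≤ (a - 1) * x ^ 2 := mul_nonneg (by linarith) (sq_nonneg x)
  have ny : 0 ≤ (a - 1) * y ^ 2 := mul_nonneg (by linarith) (sq_nonneg y)
  have nz : 0 ≤ k * z ^ 2 := mul_nonneg hk (sq_nonneg z)
  have nw : 0 ≤ m * w ^ 2 := mul_nonneg hm (sq_nonneg w)
  have px := sq_nonneg x
  have py := sq_nonneg y
  have pz := sq_nonneg z
  have pw := sq_nonneg w
  have hx := key x (by linarith)
  have hy := key y (by linarith)
  have hz := key z (by linarith)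
  have hw := key w (by linarith)
  exact ⟨⟨hx.1, hy.1, hz.1, hw.1⟩, ⟨hx.2, hy.2, hz.2, hw.2⟩⟩

/-- The constraints modulo `2` and `4` on a solution with right-hand side `12` modulo `16`. -/
lemma parity_of_sol {a k m R x y z w : ℤ} (ha : a % 2 = 1) (hR : R % 16 = 12)
    (h : IsSol a k m R (x, y, z, w)) :
    (x % 2 = 1 ∧ y % 2 = 1 ∨ x % 2 = 0 ∧ y % 2 = 0 ∧ (x + y) % 4 = 2) ∧ z % 2 = w % 2 := by
  simp only [IsSol] at h
  obtain ⟨b, rfl⟩ : ∃ b, a = 2 * b + 1 := ⟨a / 2, by omega⟩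
  have hzw : ∃ s, (16 * k + 4) * z ^ 2 + (16 * m + 4) * w ^ 2
      = 16 * s + 4 * (z ^ 2 + w ^ 2) := ⟨k * z ^ 2 + m * w ^ 2, by ring⟩
  obtain ⟨s, hs⟩ := hzw
  have h' : R = (2 * b + 1) * (x ^ 2 + 3 * y ^ 2) + 16 * s + 4 * (z ^ 2 + w ^ 2) := by linarith
  have sq1 : ∀ u : ℤ, (u % 2 = 0 ∧ ∃ p, u ^ 2 = 4 * p) ∨ (u % 2 = 1 ∧ ∃ p, u ^ 2 = 8 * p + 1) := by
    intro u
    rcases Int.emod_two_eq_zero_or_one u with h | h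
    · exact .inl ⟨h, exists_sq_of_even h⟩
    · exact .inr ⟨h, exists_sq_of_odd h⟩
  rcases Int.emod_two_eq_zero_or_one x with hx | hx <;>
    rcases Int.emod_two_eq_zero_or_one y with hy | hy
  · obtain ⟨i, rfl⟩ : ∃ i, x = 2 * i := ⟨x / 2, by omega⟩
    obtain ⟨j, rfl⟩ : ∃ j, y = 2 * j := ⟨y / 2, by omega⟩
    have h2 : R = 4 * ((2 * b + 1) * (i ^ 2 + 3 * j ^ 2) + 4 * s + (z ^ 2 + w ^ 2)) := by
      rw [h']; ring
    rcases sq1 i with ⟨hi, p, hp⟩ | ⟨hi, p, hp⟩ <;> rcases sq1 j with ⟨hj, q, hq⟩ | ⟨hj, q, hq⟩ <;>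
      rcases sq1 z with ⟨hz, u, hu⟩ | ⟨hz, u, hu⟩ <;>
      rcases sq1 w with ⟨hw, v, hv⟩ | ⟨hw, v, hv⟩ <;>
      rw [hp, hq, hu, hv] at h2 <;> ring_nf at h2 <;> omega
  · obtain ⟨p, hp⟩ := exists_sq_of_even hx
    obtain ⟨q, hq⟩ := exists_sq_of_odd hy
    rw [hp, hq] at h'
    ring_nf at h'
    omega
  · obtain ⟨p, hp⟩ := exists_sq_of_odd hx
    obtain ⟨q, hq⟩ := exists_sq_of_even hy
    rw [hp, hq] at h'
    ring_nf at h'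
    omega
  · obtain ⟨p, hp⟩ := exists_sq_of_odd hx
    obtain ⟨q, hq⟩ := exists_sq_of_odd hy
    rw [hp, hq] at h'
    rcases sq1 z with ⟨hz, u, hu⟩ | ⟨hz, u, hu⟩ <;>
      rcases sq1 w with ⟨hw, v, hv⟩ | ⟨hw, v, hv⟩ <;>
      rw [hu, hv] at h' <;> ring_nf at h' <;> omega

/-- The involution `(x, y) ↦ ((x + 3y)/2, (x - y)/2)`, which preserves `x² + 3y²` when
`x ≡ y (mod 2)`. -/
def rot (p : ℤ × ℤ × ℤ × ℤ) : ℤ × ℤ × ℤ × ℤ :=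
  ((p.1 + 3 * p.2.1) / 2, (p.1 - p.2.1) / 2, p.2.2)

lemma rot_mk (y d : ℤ) (q : ℤ × ℤ) : rot (y + 2 * d, y, q) = (2 * y + d, d, q) := by
  simp only [rot, Prod.mk.injEq, and_true]
  omega

lemma rot_rot {x y : ℤ} {q : ℤ × ℤ} (h : x % 2 = y % 2) : rot (rot (x, y, q)) = (x, y, q) := by
  simp only [rot, Prod.mk.injEq, and_true]
  omega

lemma isSol_rot {a k m R x y : ℤ} {q : ℤ × ℤ} (h : x % 2 = y % 2)
    (hs : IsSol a k m R (x, y, q)) : IsSol a k m R (rot (x, y, q)) := by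
  obtain ⟨d, rfl⟩ : ∃ d, x = y + 2 * d := ⟨(x - y) / 2, by omega⟩
  rw [rot_mk]
  simp only [IsSol] at hs ⊢
  rw [hs]
  ring

/-- For each parity `r` of `z`, each solution with `x, y` even corresponds to two with `x, y` odd:
one with `x ≡ y (mod 4)` and one with `x ≡ -y (mod 4)`. -/
lemma card_odd_eq_two_mul_card_even {a k m R : ℤ} (ha : a % 2 = 1) (hR : R % 16 = 12)
    (A : Finset (ℤ × ℤ × ℤ × ℤ)) (hA : ∀ p, p ∈ A ↔ IsSol a k m R p) (r : ℤ) :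
    (A.filter fun p => p.1 % 2 = 1 ∧ p.2.2.1 % 2 = r).card =
      2 * (A.filter fun p => p.1 % 2 = 0 ∧ p.2.2.1 % 2 = r).card := by
  have h1 : (A.filter fun p => (p.1 % 2 = 1 ∧ p.2.2.1 % 2 = r) ∧ (p.1 - p.2.1) % 4 = 0).card =
      (A.filter fun p => p.1 % 2 = 0 ∧ p.2.2.1 % 2 = r).card := by
    refine Finset.card_nbij' rot rot ?_ ?_ ?_ ?_
    · rintro ⟨x, y, z, w⟩ h
      simp only [Finset.coe_filter, Set.mem_ofPred_eq, hA] at h ⊢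
      have hp := parity_of_sol ha hR h.1
      refine ⟨isSol_rot (by omega) h.1, ?_, h.2.1.2⟩
      simp only [rot]
      omega
    · rintro ⟨x, y, z, w⟩ h
      simp only [Finset.coe_filter, Set.mem_ofPred_eq, hA] at h ⊢
      have hp := parity_of_sol ha hR h.1
      refine ⟨isSol_rot (by omega) h.1, ⟨?_, h.2.2⟩, ?_⟩ <;> simp only [rot] <;> omega
    · rintro ⟨x, y, z, w⟩ h
      simp only [Finset.coe_filter, Set.mem_ofPred_eq, hA] at h
      have hp := parity_of_sol ha hR h.1
      exact rot_rot (by omega)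
    · rintro ⟨x, y, z, w⟩ h
      simp only [Finset.coe_filter, Set.mem_ofPred_eq, hA] at h
      have hp := parity_of_sol ha hR h.1
      exact rot_rot (by omega)
  have h2 : (A.filter fun p => (p.1 % 2 = 1 ∧ p.2.2.1 % 2 = r) ∧ ¬ (p.1 - p.2.1) % 4 = 0).card =
      (A.filter fun p => (p.1 % 2 = 1 ∧ p.2.2.1 % 2 = r) ∧ (p.1 - p.2.1) % 4 = 0).card := by
    have neg_sol : ∀ {x y : ℤ} {q : ℤ × ℤ}, IsSol a k m R (x, y, q) →
        IsSol a k m R (x, -y, q) := by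
      intro x y q h
      simpa only [IsSol, neg_sq] using h
    refine Finset.card_nbij' (fun p => (p.1, -p.2.1, p.2.2)) (fun p => (p.1, -p.2.1, p.2.2))
      ?_ ?_ ?_ ?_
    · rintro ⟨x, y, z, w⟩ h
      simp only [Finset.coe_filter, Set.mem_ofPred_eq, hA] at h ⊢
      have hp := parity_of_sol ha hR h.1
      exact ⟨neg_sol h.1, h.2.1, by omega⟩
    · rintro ⟨x, y, z, w⟩ h
      simp only [Finset.coe_filter, Set.mem_ofPred_eq, hA] at h ⊢
      have hp := parity_of_sol ha hR h.1
      exact ⟨neg_sol h.1, h.2.1, by omega⟩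
    · rintro ⟨x, y, z, w⟩ _
      simp
    · rintro ⟨x, y, z, w⟩ _
      simp
  have h3 := Finset.card_filter_add_card_filter_not
    (s := A.filter fun p => p.1 % 2 = 1 ∧ p.2.2.1 % 2 = r) (fun p => (p.1 - p.2.1) % 4 = 0)
  rw [Finset.filter_filter, Finset.filter_filter] at h3
  omega

lemma card_split_s3 (A : Finset (ℤ × ℤ × ℤ × ℤ)) :
    A.card = (A.filter fun p => p.1 % 2 = 1 ∧ p.2.2.1 % 2 = 1).card +
      (A.filter fun p => p.1 % 2 = 0 ∧ p.2.2.1 % 2 = 1).card +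
      (A.filter fun p => p.1 % 2 = 1 ∧ p.2.2.1 % 2 = 0).card +
      (A.filter fun p => p.1 % 2 = 0 ∧ p.2.2.1 % 2 = 0).card := by
  have h0 := Finset.card_filter_add_card_filter_not (s := A) (fun p => p.2.2.1 % 2 = 1)
  have h1 := Finset.card_filter_add_card_filter_not
    (s := A.filter fun p => p.2.2.1 % 2 = 1) (fun p => p.1 % 2 = 1)
  have h2 := Finset.card_filter_add_card_filter_not
    (s := A.filter fun p => ¬ p.2.2.1 % 2 = 1) (fun p => p.1 % 2 = 1)
  simp only [Finset.filter_filter, Int.emod_two_ne_one] at h0 h1 h2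
  simp only [and_comm] at h0 h1 h2 ⊢
  omega

/-- Completing the square in a triangular number. -/
lemma eight_mul_triangular (x : ℤ) : 8 * (x * (x - 1) / 2) = (2 * x - 1) ^ 2 - 1 := by
  have h : 2 * (x * (x - 1) / 2) = x * (x - 1) :=
    Int.mul_ediv_cancel' (Int.even_mul_pred_self x).two_dvd
  linear_combination 4 * h

theorem stmt_3 (a k m n : ℕ) (ha : Odd a) (hn : 0 < n)
    (hcong : n % 2 = ((a - 1) / 2) % 2) :
    (tquad a (3 * a) (16 * k + 4) (16 * m + 4) n : ℚ) =
      2 / 3 * Nquad a (3 * a) (16 * k + 4) (16 * m + 4) (8 * n + 16 * k + 16 * m + 4 * a + 8) -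
        2 * Nquad a (3 * a) (16 * k + 4) (16 * m + 4) (2 * n + 4 * k + 4 * m + a + 2) := by
  have ha2 : a % 2 = 1 := Nat.odd_iff.1 ha
  obtain ⟨R, hRdef⟩ : ∃ R : ℤ, R = 8 * n + 16 * k + 16 * m + 4 * a + 8 := ⟨_, rfl⟩
  have haZ : (a : ℤ) % 2 = 1 := by omega
  have hR : R % 16 = 12 := by omega
  have hfin : {p | IsSol a k m R p}.Finite := finite_isSol (by omega) (by omega) (by omega)
  obtain ⟨A, hA⟩ : ∃ A : Finset (ℤ × ℤ × ℤ × ℤ), ∀ p, p ∈ A ↔ IsSol a k m R p :=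
    ⟨hfin.toFinset, fun p => by simp⟩
  have hN4 : Nquad a (3 * a) (16 * k + 4) (16 * m + 4) (8 * n + 16 * k + 16 * m + 4 * a + 8)
      = A.card := by
    refine Nat.subtype_card A fun p => ?_
    rw [hA, IsSol, hRdef]
    push_cast
    rfl
  have hN1 : Nquad a (3 * a) (16 * k + 4) (16 * m + 4) (2 * n + 4 * k + 4 * m + a + 2)
      = (A.filter fun p => p.1 % 2 = 0 ∧ p.2.2.1 % 2 = 0).card := by
    rw [← Nat.card_eq_finsetCard]
    refine Nat.card_congr
      { toFun := fun p => ⟨(2 * p.1.1, 2 * p.1.2.1, 2 * p.1.2.2.1, 2 * p.1.2.2.2), ?_⟩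
        invFun := fun p => ⟨(p.1.1 / 2, p.1.2.1 / 2, p.1.2.2.1 / 2, p.1.2.2.2 / 2), ?_⟩
        left_inv := ?_
        right_inv := ?_ }
    · obtain ⟨⟨x, y, z, w⟩, h⟩ := p
      push_cast at h
      simp only [Finset.mem_filter, hA, IsSol]
      refine ⟨?_, by omega, by omega⟩
      linear_combination hRdef + 4 * h
    · obtain ⟨⟨x, y, z, w⟩, h⟩ := p
      simp only [Finset.mem_filter, hA] at h
      have hp := parity_of_sol haZ hR h.1
      obtain ⟨x, rfl⟩ : ∃ i, x = 2 * i := ⟨x / 2, by omega⟩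
      obtain ⟨y, rfl⟩ : ∃ i, y = 2 * i := ⟨y / 2, by omega⟩
      obtain ⟨z, rfl⟩ : ∃ i, z = 2 * i := ⟨z / 2, by omega⟩
      obtain ⟨w, rfl⟩ : ∃ i, w = 2 * i := ⟨w / 2, by omega⟩
      have h' := h.1
      simp only [IsSol] at h'
      simp only [Int.mul_ediv_cancel_left _ (two_ne_zero (α := ℤ))]
      push_cast
      linarith
    · rintro ⟨⟨x, y, z, w⟩, h⟩
      simp
    · rintro ⟨⟨x, y, z, w⟩, h⟩
      simp only [Finset.mem_filter, hA] at h
      have hp := parity_of_sol haZ hR h.1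
      simp only [Subtype.mk.injEq, Prod.mk.injEq]
      omega
  have ht : tquad a (3 * a) (16 * k + 4) (16 * m + 4) n
      = (A.filter fun p => p.1 % 2 = 1 ∧ p.2.2.1 % 2 = 1).card := by
    rw [← Nat.card_eq_finsetCard]
    refine Nat.card_congr
      { toFun := fun p => ⟨(2 * p.1.1 - 1, 2 * p.1.2.1 - 1, 2 * p.1.2.2.1 - 1,
          2 * p.1.2.2.2 - 1), ?_⟩
        invFun := fun p => ⟨((p.1.1 + 1) / 2, (p.1.2.1 + 1) / 2, (p.1.2.2.1 + 1) / 2,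
          (p.1.2.2.2 + 1) / 2), ?_⟩
        left_inv := ?_
        right_inv := ?_ }
    · obtain ⟨⟨x, y, z, w⟩, h⟩ := p
      push_cast at h
      simp only [Finset.mem_filter, hA, IsSol]
      refine ⟨?_, by omega, by omega⟩
      linear_combination hRdef + 8 * h + a * eight_mul_triangular x
        + 3 * a * eight_mul_triangular y + (16 * k + 4) * eight_mul_triangular z
        + (16 * m + 4) * eight_mul_triangular w
    · obtain ⟨⟨x, y, z, w⟩, h⟩ := p
      simp only [Finset.mem_filter, hA] at h
      have hp := parity_of_sol haZ hR h.1
      obtain ⟨x, rfl⟩ : ∃ i, x = 2 * i - 1 := ⟨(x + 1) / 2, by omega⟩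
      obtain ⟨y, rfl⟩ : ∃ i, y = 2 * i - 1 := ⟨(y + 1) / 2, by omega⟩
      obtain ⟨z, rfl⟩ : ∃ i, z = 2 * i - 1 := ⟨(z + 1) / 2, by omega⟩
      obtain ⟨w, rfl⟩ : ∃ i, w = 2 * i - 1 := ⟨(w + 1) / 2, by omega⟩
      have h' := h.1
      simp only [IsSol] at h'
      simp only [sub_add_cancel, Int.mul_ediv_cancel_left _ (two_ne_zero (α := ℤ))]
      push_cast
      refine mul_left_cancel₀ (by norm_num : (8 : ℤ) ≠ 0) ?_
      linear_combination h' - hRdef - a * eight_mul_triangular x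
        - 3 * a * eight_mul_triangular y - (16 * k + 4) * eight_mul_triangular z
        - (16 * m + 4) * eight_mul_triangular w
    · rintro ⟨⟨x, y, z, w⟩, h⟩
      simp
    · rintro ⟨⟨x, y, z, w⟩, h⟩
      simp only [Finset.mem_filter, hA] at h
      have hp := parity_of_sol haZ hR h.1
      simp only [Subtype.mk.injEq, Prod.mk.injEq]
      omega
  have h0 := card_odd_eq_two_mul_card_even haZ hR A hA 0
  have h1 := card_odd_eq_two_mul_card_even haZ hR A hA 1
  have hs := card_split_s3 A
  rw [hN4, hN1, ht, hs, h0, h1]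
  push_cast
  ring
end
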